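/- Fix r ∈ (0,1) and λ ∈ (-1, 1). Then m·μ_m(λ) ~ C(λ)·m^{(λ-(2r-1))/(1+λ)}/(2 r log m) as m → ∞, where C(λ) := (1+λ)²/(2π·sqrt(1-λ²)). Consequently, m·μ_m(λ) → ∞ if λ > 2r-1, and m·μ_m(λ) → 0 if λ < 2r-1. -/

import Mathlib

open MeasureTheory ProbabilityTheory Filter Topology

noncomputable section

/-- Centered bivariate Gaussian pair `(w, v)` in which `w` and `v` are each standard
normal and `E[w v] = lam`, realized as the law of `(z₁, lam·z₁ + √(1-lam²)·z₂)`
for independent standard normals `z₁, z₂`. -/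
def gaussPair (lam : ℝ) : Measure (ℝ × ℝ) :=
  Measure.map (fun z : ℝ × ℝ => (z.1, lam * z.1 + Real.sqrt (1 - lam ^ 2) * z.2))
    ((gaussianReal 0 1).prod (gaussianReal 0 1))

/-- `μ(λ,h) = P(w ≥ h ∧ v ≥ h)`. -/
def mu (lam h : ℝ) : ℝ := (gaussPair lam {p : ℝ × ℝ | h ≤ p.1 ∧ h ≤ p.2}).toReal

/-- `σ(λ,h) = sqrt(μ(λ,h)(1-μ(λ,h)))`. -/
def sigma' (lam h : ℝ) : ℝ := Real.sqrt (mu lam h * (1 - mu lam h))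

/-- The threshold `h_m = sqrt(2 r log m)`. -/
def hthr (r : ℝ) (m : ℕ) : ℝ := Real.sqrt (2 * r * Real.log m)

/-- `μ_m(λ) = μ(λ, h_m)`. -/
def muM (r : ℝ) (m : ℕ) (lam : ℝ) : ℝ := mu lam (hthr r m)

/-- `σ_m(λ) = σ(λ, h_m)`. -/
def sigM (r : ℝ) (m : ℕ) (lam : ℝ) : ℝ := sigma' lam (hthr r m)

/-- Canonical probability space carrying `m` i.i.d. random vectors in `ℝ^d`
whose coordinates are i.i.d. standard normal: `a_i ω := ω i`. -/
def Prob (d m : ℕ) : Measure (Fin m → Fin d → ℝ) :=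
  Measure.pi fun _ => Measure.pi fun _ : Fin d => gaussianReal 0 1

/-- Euclidean inner product on `ℝ^d`. -/
def dotp {d : ℕ} (a x : Fin d → ℝ) : ℝ := ∑ j, a j * x j

/-- `x` lies on the unit sphere `S^{d-1}`. -/
def unitVec {d : ℕ} (x : Fin d → ℝ) : Prop := ∑ j, x j ^ 2 = 1

/-- The score `S_m(x,y) = (1/m) ∑_i 1[⟨a_i,x⟩ ≥ h_m]·1[⟨a_i,y⟩ ≥ h_m]`. -/
def score (d m : ℕ) (r : ℝ) (x y : Fin d → ℝ) (ω : Fin m → Fin d → ℝ) : ℝ :=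
  (1 / (m : ℝ)) * ∑ i, (if hthr r m ≤ dotp (ω i) x then (1 : ℝ) else 0) *
    (if hthr r m ≤ dotp (ω i) y then (1 : ℝ) else 0)

/-- The standard normal cumulative distribution function `Φ`. -/
def Phi (t : ℝ) : ℝ := (gaussianReal 0 1 (Set.Iic t)).toReal

/-- The standard normal upper tail `P(N(0,1) ≥ t)`. -/
def gaussTail (t : ℝ) : ℝ := (gaussianReal 0 1 {z : ℝ | t ≤ z}).toReal

/-! On the quadrant `[h, ∞)²` the bivariate density is largest at the corner `(h, h)` and decays
exponentially away from it at scale `1 / h`. Rescaling by `p ↦ (h, h) + h⁻¹ • p` extracts the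
factor `exp (-h² / (1 + λ)) / h²` and leaves `exp (-(p.1 + p.2) / (1 + λ))`, whose integral over the
first quadrant is `(1 + λ)²`, times a Gaussian correction tending to `1`; dominated convergence
gives the asymptotics of the orthant probability. At the threshold `h_m` the exponential is a power
of `m`. -/

section Integration

lemma setIntegral_preimage_const_add_smul {E F : Type*} [NormedAddCommGroup E] [NormedSpace ℝ E]
    [FiniteDimensional ℝ E] [MeasurableSpace E] [BorelSpace E] [NormedAddCommGroup F]
    [NormedSpace ℝ F] (μ : Measure E) [μ.IsAddHaarMeasure] (f : E → F) {s : Set E}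
    (hs : MeasurableSet s) (a : E) (c : ℝ) :
    ∫ x in (fun x ↦ a + c • x) ⁻¹' s, f (a + c • x) ∂μ =
      |(c ^ Module.finrank ℝ E)⁻¹| • ∫ x in s, f x ∂μ := by
  have hmeas : Measurable fun x : E ↦ a + c • x := by fun_prop
  calc ∫ x in (fun x ↦ a + c • x) ⁻¹' s, f (a + c • x) ∂μ
      = ∫ x, s.indicator f (a + c • x) ∂μ := (integral_indicator (hmeas hs)).symm
    _ = |(c ^ Module.finrank ℝ E)⁻¹| • ∫ x, s.indicator f (a + x) ∂μ :=
      Measure.integral_comp_smul μ (fun x ↦ s.indicator f (a + x)) c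
    _ = |(c ^ Module.finrank ℝ E)⁻¹| • ∫ x in s, f x ∂μ := by
      rw [integral_add_left_eq_self, integral_indicator hs]

lemma preimage_const_add_smul_Ici {E : Type*} [AddCommGroup E] [PartialOrder E]
    [IsOrderedAddMonoid E] [Module ℝ E] [PosSMulMono ℝ E] {c : ℝ} (hc : 0 < c) (a : E) :
    (fun x ↦ a + c • x) ⁻¹' Set.Ici a = Set.Ici 0 := by
  ext x
  rw [Set.mem_preimage, Set.mem_Ici, le_add_iff_nonneg_right, Set.mem_Ici,
    smul_nonneg_iff_nonneg_of_pos_left hc]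

lemma tendsto_integral_exp_neg_mul_smul {α E : Type*} [MeasurableSpace α] [NormedAddCommGroup E]
    [NormedSpace ℝ E] {μ : Measure α} {g : α → E} {Q : α → ℝ} (hg : Integrable g μ)
    (hQ : AEMeasurable Q μ) (hQ_nonneg : 0 ≤ᵐ[μ] Q) :
    Tendsto (fun ε : ℝ ↦ ∫ x, Real.exp (-(ε * Q x)) • g x ∂μ) (𝓝[≥] 0) (𝓝 (∫ x, g x ∂μ)) := by
  refine tendsto_integral_filter_of_dominated_convergence (fun x ↦ ‖g x‖)
    (.of_forall fun ε ↦ ?_) ?_ hg.norm (.of_forall fun x ↦ ?_)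
  · exact (hQ.const_mul ε).neg.exp.aestronglyMeasurable.smul hg.aestronglyMeasurable
  · filter_upwards [self_mem_nhdsWithin] with ε (hε : 0 ≤ ε)
    filter_upwards [hQ_nonneg] with x hx
    rw [norm_smul, Real.norm_of_nonneg (Real.exp_pos _).le]
    exact mul_le_of_le_one_left (norm_nonneg _)
      (Real.exp_le_one_iff.2 (neg_nonpos.2 (mul_nonneg hε hx)))
  · have hcont : Continuous fun ε : ℝ ↦ Real.exp (-(ε * Q x)) • g x := by fun_prop
    simpa using (hcont.tendsto 0).mono_left nhdsWithin_le_nhds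

lemma exp_neg_mul_fst_add_snd (a : ℝ) (p : ℝ × ℝ) :
    Real.exp (-(a * (p.1 + p.2))) = Real.exp (-a * p.1) * Real.exp (-a * p.2) := by
  rw [← Real.exp_add]
  ring_nf

variable {a : ℝ}

lemma integrableOn_Ici_exp_neg_mul_fst_add_snd (ha : 0 < a) :
    IntegrableOn (fun p : ℝ × ℝ ↦ Real.exp (-(a * (p.1 + p.2)))) (Set.Ici 0) := by
  have hfactor : IntegrableOn (fun x : ℝ ↦ Real.exp (-a * x)) (Set.Ici 0) :=
    (integrableOn_Ici_iff_integrableOn_Ioi).2 (integrableOn_exp_mul_Ioi (neg_lt_zero.2 ha) 0)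
  simp_rw [exp_neg_mul_fst_add_snd]
  rw [← Prod.mk_zero_zero, ← Set.Ici_prod_Ici, IntegrableOn, Measure.volume_eq_prod,
    ← Measure.prod_restrict]
  exact hfactor.mul_prod hfactor

lemma integral_Ici_exp_neg_mul_fst_add_snd (ha : 0 < a) :
    ∫ p : ℝ × ℝ in Set.Ici 0, Real.exp (-(a * (p.1 + p.2))) = (a ^ 2)⁻¹ := by
  have hfactor : ∫ x : ℝ in Set.Ici 0, Real.exp (-a * x) = a⁻¹ := by
    rw [integral_Ici_eq_integral_Ioi, integral_exp_mul_Ioi (neg_lt_zero.2 ha)]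
    simp
  simp_rw [exp_neg_mul_fst_add_snd]
  rw [← Prod.mk_zero_zero, ← Set.Ici_prod_Ici, Measure.volume_eq_prod,
    setIntegral_prod_mul (fun x ↦ Real.exp (-a * x)) (fun y ↦ Real.exp (-a * y)), hfactor]
  ring

end Integration

section Density

/-- The squared Mahalanobis norm of `p` with respect to the covariance matrix
`!![1, lam; lam, 1]`; minus one half of it is the exponent of the density of `gaussPair lam`. -/
def mahalanobisSq (lam : ℝ) (p : ℝ × ℝ) : ℝ :=
  (p.1 ^ 2 - 2 * lam * p.1 * p.2 + p.2 ^ 2) / (1 - lam ^ 2)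

/-- The density of `gaussPair lam` with respect to Lebesgue measure, for `-1 < lam < 1`. -/
def gaussPairPDFReal (lam : ℝ) (p : ℝ × ℝ) : ℝ :=
  (2 * Real.pi * Real.sqrt (1 - lam ^ 2))⁻¹ * Real.exp (-(mahalanobisSq lam p / 2))

variable {lam : ℝ}

lemma one_sub_sq_pos (hlam : lam ∈ Set.Ioo (-1 : ℝ) 1) : 0 < 1 - lam ^ 2 := by
  nlinarith [hlam.1, hlam.2]

@[fun_prop]
lemma measurable_mahalanobisSq (lam : ℝ) : Measurable (mahalanobisSq lam) := by
  unfold mahalanobisSq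
  fun_prop

@[fun_prop]
lemma measurable_gaussPairPDFReal (lam : ℝ) : Measurable (gaussPairPDFReal lam) := by
  unfold gaussPairPDFReal
  fun_prop

lemma mahalanobisSq_nonneg (hlam : lam ∈ Set.Ioo (-1 : ℝ) 1) (p : ℝ × ℝ) :
    0 ≤ mahalanobisSq lam p := by
  have hs := one_sub_sq_pos hlam
  refine div_nonneg ?_ hs.le
  calc 0 ≤ (p.1 - lam * p.2) ^ 2 + (1 - lam ^ 2) * p.2 ^ 2 := by positivity
    _ = p.1 ^ 2 - 2 * lam * p.1 * p.2 + p.2 ^ 2 := by ring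

lemma gaussPairPDFReal_nonneg (lam : ℝ) (p : ℝ × ℝ) : 0 ≤ gaussPairPDFReal lam p := by
  unfold gaussPairPDFReal
  positivity

lemma gaussianReal_map_const_add_const_mul (μ : ℝ) (v : NNReal) (a c : ℝ) :
    (gaussianReal μ v).map (fun y ↦ a + c * y) =
      gaussianReal (c * μ + a) ((c ^ 2).toNNReal * v) := by
  have hcomp : (fun y : ℝ ↦ a + c * y) = (a + ·) ∘ (c * ·) := rfl
  rw [hcomp, ← Measure.map_map (by fun_prop) (by fun_prop), gaussianReal_map_const_mul,
    gaussianReal_map_const_add, Real.toNNReal_of_nonneg (sq_nonneg c)]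

lemma gaussianPDFReal_mul_gaussianPDFReal (hlam : lam ∈ Set.Ioo (-1 : ℝ) 1) (x y : ℝ) :
    gaussianPDFReal 0 1 x * gaussianPDFReal (lam * x) (1 - lam ^ 2).toNNReal y =
      gaussPairPDFReal lam (x, y) := by
  have hs := one_sub_sq_pos hlam
  have hexponent : -x ^ 2 / 2 + -(y - lam * x) ^ 2 / (2 * (1 - lam ^ 2)) =
      -(mahalanobisSq lam (x, y) / 2) := by
    simp only [mahalanobisSq]
    field_simp
    ring
  have hconst : (Real.sqrt (2 * Real.pi))⁻¹ * (Real.sqrt (2 * Real.pi * (1 - lam ^ 2)))⁻¹ =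
      (2 * Real.pi * Real.sqrt (1 - lam ^ 2))⁻¹ := by
    rw [← mul_inv, Real.sqrt_mul (by positivity) (1 - lam ^ 2), ← mul_assoc,
      Real.mul_self_sqrt (by positivity)]
  simp only [gaussianPDFReal, gaussPairPDFReal, NNReal.coe_one, mul_one, sub_zero,
    Real.coe_toNNReal _ hs.le]
  rw [mul_mul_mul_comm, ← Real.exp_add, hconst, hexponent]

lemma gaussPair_apply (hlam : lam ^ 2 ≤ 1) {S : Set (ℝ × ℝ)} (hS : MeasurableSet S) :
    gaussPair lam S = ∫⁻ x, gaussianReal (lam * x) (1 - lam ^ 2).toNNReal (Prod.mk x ⁻¹' S)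
      ∂gaussianReal 0 1 := by
  have hmap : Measurable fun z : ℝ × ℝ ↦
      (z.1, lam * z.1 + Real.sqrt (1 - lam ^ 2) * z.2) := by fun_prop
  have hconditional (x : ℝ) : gaussianReal (lam * x) (1 - lam ^ 2).toNNReal =
      (gaussianReal 0 1).map fun y ↦ lam * x + Real.sqrt (1 - lam ^ 2) * y := by
    rw [gaussianReal_map_const_add_const_mul, Real.sq_sqrt (sub_nonneg.2 hlam), mul_zero,
      zero_add, mul_one]
  rw [gaussPair, Measure.map_apply hmap hS, Measure.prod_apply (hmap hS)]
  refine lintegral_congr fun x ↦ ?_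
  rw [hconditional, Measure.map_apply (by fun_prop) (measurable_prodMk_left hS)]
  rfl

lemma gaussPair_eq_withDensity (hlam : lam ∈ Set.Ioo (-1 : ℝ) 1) :
    gaussPair lam = volume.withDensity (fun p ↦ ENNReal.ofReal (gaussPairPDFReal lam p)) := by
  have hvar : (1 - lam ^ 2).toNNReal ≠ 0 := (Real.toNNReal_pos.2 (one_sub_sq_pos hlam)).ne'
  ext S hS
  have hsection (x : ℝ) : gaussianPDF 0 1 x *
      gaussianReal (lam * x) (1 - lam ^ 2).toNNReal (Prod.mk x ⁻¹' S) =
        ∫⁻ y, S.indicator (fun p ↦ ENNReal.ofReal (gaussPairPDFReal lam p)) (x, y) := by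
    have hSx : MeasurableSet (Prod.mk x ⁻¹' S) := measurable_prodMk_left hS
    rw [gaussianReal_apply _ hvar, ← lintegral_const_mul' _ _ gaussianPDF_ne_top,
      ← lintegral_indicator hSx]
    refine lintegral_congr fun y ↦ ?_
    simp only [Set.indicator, gaussianPDF, ← gaussianPDFReal_mul_gaussianPDFReal hlam,
      ENNReal.ofReal_mul (gaussianPDFReal_nonneg 0 1 x)]
    rfl
  calc gaussPair lam S
      = ∫⁻ x, gaussianPDF 0 1 x *
          gaussianReal (lam * x) (1 - lam ^ 2).toNNReal (Prod.mk x ⁻¹' S) := by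
        rw [gaussPair_apply (sub_nonneg.1 (one_sub_sq_pos hlam).le) hS,
          gaussianReal_of_var_ne_zero 0 one_ne_zero,
          lintegral_withDensity_eq_lintegral_mul_non_measurable _ (measurable_gaussianPDF 0 1)
            (.of_forall fun _ ↦ gaussianPDF_lt_top)]
        rfl
    _ = ∫⁻ x, ∫⁻ y, S.indicator (fun p ↦ ENNReal.ofReal (gaussPairPDFReal lam p)) (x, y) :=
        lintegral_congr hsection
    _ = volume.withDensity (fun p ↦ ENNReal.ofReal (gaussPairPDFReal lam p)) S := by
        have hpdf : Measurable fun p ↦ ENNReal.ofReal (gaussPairPDFReal lam p) := by fun_prop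
        rw [withDensity_apply _ hS, ← lintegral_indicator hS, Measure.volume_eq_prod,
          lintegral_prod _ (hpdf.indicator hS).aemeasurable]

end Density

section Orthant

variable {lam : ℝ}

lemma mu_eq_setIntegral (hlam : lam ∈ Set.Ioo (-1 : ℝ) 1) (h : ℝ) :
    mu lam h = ∫ p in Set.Ici (h, h), gaussPairPDFReal lam p := by
  have hquadrant : {p : ℝ × ℝ | h ≤ p.1 ∧ h ≤ p.2} = Set.Ici (h, h) := rfl
  rw [mu, hquadrant, gaussPair_eq_withDensity hlam, withDensity_apply _ measurableSet_Ici,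
    integral_eq_lintegral_of_nonneg_ae (.of_forall (gaussPairPDFReal_nonneg lam))
      (measurable_gaussPairPDFReal lam).aestronglyMeasurable]

lemma mahalanobisSq_corner_add_inv_smul (hlam : lam ∈ Set.Ioo (-1 : ℝ) 1) {h : ℝ} (hh : h ≠ 0)
    (p : ℝ × ℝ) :
    mahalanobisSq lam ((h, h) + h⁻¹ • p) =
      2 * (h ^ 2 / (1 + lam)) + 2 * ((1 + lam)⁻¹ * (p.1 + p.2)) +
        (h ^ 2)⁻¹ * mahalanobisSq lam p := by
  have hadd : 1 + lam ≠ 0 := by linarith [hlam.1]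
  have hsub : 1 - lam ≠ 0 := by linarith [hlam.2]
  have hfactor : 1 - lam ^ 2 = (1 + lam) * (1 - lam) := by ring
  simp only [mahalanobisSq, hfactor, Prod.fst_add, Prod.snd_add, Prod.smul_fst, Prod.smul_snd,
    smul_eq_mul]
  field_simp
  ring

lemma gaussPairPDFReal_corner_add_inv_smul (hlam : lam ∈ Set.Ioo (-1 : ℝ) 1) {h : ℝ} (hh : h ≠ 0)
    (p : ℝ × ℝ) :
    gaussPairPDFReal lam ((h, h) + h⁻¹ • p) =
      (2 * Real.pi * Real.sqrt (1 - lam ^ 2))⁻¹ * Real.exp (-(h ^ 2 / (1 + lam))) *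
        (Real.exp (-((h ^ 2)⁻¹ * (mahalanobisSq lam p / 2))) *
          Real.exp (-((1 + lam)⁻¹ * (p.1 + p.2)))) := by
  rw [gaussPairPDFReal, mahalanobisSq_corner_add_inv_smul hlam hh, ← Real.exp_add,
    mul_assoc _ (Real.exp _), ← Real.exp_add]
  congr 2
  ring

lemma mu_eq_mul_setIntegral (hlam : lam ∈ Set.Ioo (-1 : ℝ) 1) {h : ℝ} (hh : 0 < h) :
    mu lam h =
      (2 * Real.pi * Real.sqrt (1 - lam ^ 2))⁻¹ * (Real.exp (-(h ^ 2 / (1 + lam))) / h ^ 2) *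
        ∫ p : ℝ × ℝ in Set.Ici 0, Real.exp (-((h ^ 2)⁻¹ * (mahalanobisSq lam p / 2))) *
          Real.exp (-((1 + lam)⁻¹ * (p.1 + p.2))) := by
  have hrescale := setIntegral_preimage_const_add_smul volume (gaussPairPDFReal lam)
    (measurableSet_Ici (a := (h, h))) (h, h) h⁻¹
  rw [preimage_const_add_smul_Ici (inv_pos.2 hh), ← mu_eq_setIntegral hlam] at hrescale
  simp only [gaussPairPDFReal_corner_add_inv_smul hlam hh.ne', integral_const_mul,
    Module.finrank_prod, Module.finrank_self, smul_eq_mul] at hrescale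
  rw [inv_pow, inv_inv, abs_of_pos (by positivity)] at hrescale
  rw [mul_div_assoc', div_mul_eq_mul_div, hrescale]
  field_simp

lemma tendsto_setIntegral_rescaled (hlam : lam ∈ Set.Ioo (-1 : ℝ) 1) :
    Tendsto (fun h : ℝ ↦ ∫ p : ℝ × ℝ in Set.Ici 0,
      Real.exp (-((h ^ 2)⁻¹ * (mahalanobisSq lam p / 2))) *
        Real.exp (-((1 + lam)⁻¹ * (p.1 + p.2)))) atTop (𝓝 ((1 + lam) ^ 2)) := by
  have hrate : 0 < (1 + lam)⁻¹ := inv_pos.2 (by linarith [hlam.1])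
  have hε : Tendsto (fun h : ℝ ↦ (h ^ 2)⁻¹) atTop (𝓝[≥] 0) :=
    tendsto_nhdsWithin_iff.2 ⟨(tendsto_pow_atTop two_ne_zero).inv_tendsto_atTop,
      .of_forall fun h ↦ inv_nonneg.2 (sq_nonneg h)⟩
  have hlaplace := tendsto_integral_exp_neg_mul_smul
    (integrableOn_Ici_exp_neg_mul_fst_add_snd hrate)
    ((measurable_mahalanobisSq lam).div_const 2).aemeasurable
    (.of_forall fun p ↦ div_nonneg (mahalanobisSq_nonneg hlam p) zero_le_two)
  rw [integral_Ici_exp_neg_mul_fst_add_snd hrate, inv_pow, inv_inv] at hlaplace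
  exact hlaplace.comp hε

theorem isEquivalent_mu (hlam : lam ∈ Set.Ioo (-1 : ℝ) 1) :
    Asymptotics.IsEquivalent atTop (mu lam) fun h ↦
      (1 + lam) ^ 2 / (2 * Real.pi * Real.sqrt (1 - lam ^ 2)) *
        (Real.exp (-(h ^ 2 / (1 + lam))) / h ^ 2) := by
  have hlimit : (1 + lam) ^ 2 ≠ 0 := pow_ne_zero 2 (by linarith [hlam.1])
  have hintegral := (Asymptotics.isEquivalent_const_iff_tendsto hlimit).2
    (tendsto_setIntegral_rescaled hlam)
  have hprefactor : Asymptotics.IsEquivalent atTop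
      (fun h : ℝ ↦ (2 * Real.pi * Real.sqrt (1 - lam ^ 2))⁻¹ *
        (Real.exp (-(h ^ 2 / (1 + lam))) / h ^ 2)) _ := .refl
  refine ((hprefactor.mul hintegral).congr_left ?_).congr_right (.of_forall fun h ↦ ?_)
  · filter_upwards [eventually_gt_atTop 0] with h hh
    exact (mu_eq_mul_setIntegral hlam hh).symm
  · simp only [Pi.mul_apply, Function.const_apply]
    ring

end Orthant

section Growth

lemma tendsto_rpow_div_log_atTop {a : ℝ} (ha : 0 < a) :
    Tendsto (fun x : ℝ ↦ x ^ a / Real.log x) atTop atTop := by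
  have hzero : Tendsto (fun x : ℝ ↦ Real.log x / x ^ a) atTop (𝓝[>] 0) := by
    refine tendsto_nhdsWithin_iff.2 ⟨(isLittleO_log_rpow_atTop ha).tendsto_div_nhds_zero, ?_⟩
    filter_upwards [eventually_gt_atTop 1] with x hx
    exact div_pos (Real.log_pos hx) (Real.rpow_pos_of_pos (one_pos.trans hx) a)
  simpa only [Pi.inv_def, inv_div] using hzero.inv_tendsto_nhdsGT_zero

lemma tendsto_rpow_div_log_nhds_zero {a : ℝ} (ha : a ≤ 0) :
    Tendsto (fun x : ℝ ↦ x ^ a / Real.log x) atTop (𝓝 0) := by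
  refine squeeze_zero' ?_ ?_ Real.tendsto_log_atTop.inv_tendsto_atTop
  all_goals filter_upwards [eventually_gt_atTop 1] with x hx
  · exact div_nonneg (Real.rpow_nonneg (by linarith) a) (Real.log_pos hx).le
  · rw [Pi.inv_apply, ← one_div]
    have := Real.log_pos hx
    gcongr
    exact Real.rpow_le_one_of_one_le_of_nonpos hx.le ha

end Growth

section Threshold

variable {r lam : ℝ}

lemma hthr_sq (hr : 0 ≤ r) (m : ℕ) : hthr r m ^ 2 = 2 * r * Real.log m :=
  Real.sq_sqrt (mul_nonneg (by positivity) (Real.log_natCast_nonneg m))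

lemma tendsto_hthr_atTop (hr : 0 < r) : Tendsto (hthr r) atTop atTop :=
  Real.tendsto_sqrt_atTop.comp
    ((Real.tendsto_log_atTop.comp tendsto_natCast_atTop_atTop).const_mul_atTop (by positivity))

lemma natCast_mul_exp_neg_hthr_sq_div (hr : 0 ≤ r) (hlam : -1 < lam) {m : ℕ} (hm : m ≠ 0) :
    (m : ℝ) * Real.exp (-(hthr r m ^ 2 / (1 + lam))) =
      (m : ℝ) ^ ((lam - (2 * r - 1)) / (1 + lam)) := by
  have hm_pos : (0 : ℝ) < m := by positivity
  have hadd : 1 + lam ≠ 0 := by linarith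
  calc (m : ℝ) * Real.exp (-(hthr r m ^ 2 / (1 + lam)))
      = Real.exp (Real.log m) * Real.exp (-(2 * r * Real.log m / (1 + lam))) := by
        rw [Real.exp_log hm_pos, hthr_sq hr]
    _ = Real.exp (Real.log m * ((lam - (2 * r - 1)) / (1 + lam))) := by
        rw [← Real.exp_add]
        congr 1
        field_simp
        ring
    _ = (m : ℝ) ^ ((lam - (2 * r - 1)) / (1 + lam)) := (Real.rpow_def_of_pos hm_pos _).symm

theorem isEquivalent_natCast_mul_muM (hr : 0 < r) (hlam : lam ∈ Set.Ioo (-1 : ℝ) 1) :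
    Asymptotics.IsEquivalent atTop (fun m : ℕ ↦ (m : ℝ) * muM r m lam)
      (fun m : ℕ ↦ ((1 + lam) ^ 2 / (2 * Real.pi * Real.sqrt (1 - lam ^ 2))) *
        (m : ℝ) ^ ((lam - (2 * r - 1)) / (1 + lam)) / (2 * r * Real.log m)) := by
  have hcast : Asymptotics.IsEquivalent atTop (fun m : ℕ ↦ (m : ℝ)) _ := .refl
  refine (hcast.mul ((isEquivalent_mu hlam).comp_tendsto (tendsto_hthr_atTop hr))).congr_right ?_
  filter_upwards [eventually_ne_atTop 0] with m hm
  simp only [Pi.mul_apply, Function.comp_apply]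
  rw [← natCast_mul_exp_neg_hthr_sq_div hr.le hlam.1 hm, ← hthr_sq hr.le]
  ring

end Threshold

theorem stmt13_general {r lam : ℝ} (hr : 0 < r) (hlam : lam ∈ Set.Ioo (-1 : ℝ) 1) :
    Asymptotics.IsEquivalent atTop (fun m : ℕ ↦ (m : ℝ) * muM r m lam)
      (fun m : ℕ ↦ ((1 + lam) ^ 2 / (2 * Real.pi * Real.sqrt (1 - lam ^ 2))) *
        (m : ℝ) ^ ((lam - (2 * r - 1)) / (1 + lam)) / (2 * r * Real.log m)) ∧
    (2 * r - 1 < lam → Tendsto (fun m : ℕ ↦ (m : ℝ) * muM r m lam) atTop atTop) ∧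
    (lam ≤ 2 * r - 1 → Tendsto (fun m : ℕ ↦ (m : ℝ) * muM r m lam) atTop (𝓝 0)) := by
  have hadd : 0 < 1 + lam := by linarith [hlam.1]
  have hC : 0 < (1 + lam) ^ 2 / (2 * Real.pi * Real.sqrt (1 - lam ^ 2)) / (2 * r) := by
    have := one_sub_sq_pos hlam
    positivity
  have hequiv := isEquivalent_natCast_mul_muM hr hlam
  have hequiv' : Asymptotics.IsEquivalent atTop (fun m : ℕ ↦ (m : ℝ) * muM r m lam)
      (fun m : ℕ ↦ (1 + lam) ^ 2 / (2 * Real.pi * Real.sqrt (1 - lam ^ 2)) / (2 * r) *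
        ((m : ℝ) ^ ((lam - (2 * r - 1)) / (1 + lam)) / Real.log m)) := by
    simpa only [mul_div_mul_comm] using hequiv
  refine ⟨hequiv, fun hlt ↦ hequiv'.symm.tendsto_atTop ?_, fun hle ↦ hequiv'.symm.tendsto_nhds ?_⟩
  · exact ((tendsto_rpow_div_log_atTop (div_pos (sub_pos.2 hlt) hadd)).comp
      tendsto_natCast_atTop_atTop).const_mul_atTop hC
  · have hzero := (tendsto_rpow_div_log_nhds_zero
      (div_nonpos_of_nonpos_of_nonneg (sub_nonpos.2 hle) hadd.le)).comp
      (tendsto_natCast_atTop_atTop (R := ℝ))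
    simpa using hzero.const_mul _

/-- expected number of nonzero summands in the score, with the
phase transition at `λ = 2r - 1`. -/
theorem stmt13 (r : ℝ) (hr : r ∈ Set.Ioo (0 : ℝ) 1)
    (lam : ℝ) (hlam : lam ∈ Set.Ioo (-1 : ℝ) 1) :
    Asymptotics.IsEquivalent atTop (fun m : ℕ => (m : ℝ) * muM r m lam)
      (fun m : ℕ => ((1 + lam) ^ 2 / (2 * Real.pi * Real.sqrt (1 - lam ^ 2))) *
        (m : ℝ) ^ ((lam - (2 * r - 1)) / (1 + lam)) / (2 * r * Real.log m)) ∧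
    (2 * r - 1 < lam → Tendsto (fun m : ℕ => (m : ℝ) * muM r m lam) atTop atTop) ∧
    (lam < 2 * r - 1 → Tendsto (fun m : ℕ => (m : ℝ) * muM r m lam) atTop (nhds 0)) := by
  have h := stmt13_general hr.1 hlam
  exact ⟨h.1, h.2.1, fun hlt ↦ h.2.2 hlt.le⟩

end
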